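/- The set of pairs (k,p) with k ∈ ℚ^4, p ∈ ℚ^12, all entries nonnegative, and p satisfying the 70 inequalities with right-hand sides given by k, is exactly the set of linear combinations with nonnegative rational coefficients of the 52 fundamental generators. (This is Proposition 4 of the paper: the cone Σ^f_ℚ spanned by the essential signatures of fundamental highest weights of D4 is given by the listed inequalities.) -/

import Mathlib

/-!
Impose the 70 inequalities one at a time on the nonnegative orthant. If a cone is generated by `S`,
then its intersection with `{f ≥ 0}` is generated by the members of `S` on which `f` is nonnegative
and by the combinations `f(p) q - f(q) p` with `f(p) > 0 > f(q)`. Most of these are redundant: if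
no nonzero vector of the cone satisfies all the inequalities with equality, then a family of nonzero
vectors of the cone generates it as soon as every nonzero vector of the cone has a support (the set
of its strict inequalities) containing that of a member, because subtracting the largest possible
multiple of that member shrinks the support. A combination can thus be discarded whenever its
support contains that of a vector already kept. After 70 steps there remain 51 integer vectors, each
a multiple of a fundamental generator, and the fundamental generators satisfy the inequalities.
-/

/-- The 70 linear inequalities defining Σ(k). -/
def SatisfiesIneqs (k : Fin 4 → ℚ) (p : Fin 12 → ℚ) : Prop :=
  p 11 ≤ k 0 ∧
  p 10 ≤ k 1 ∧
  p 8 ≤ k 2 ∧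
  p 3 ≤ k 3 ∧
  p 6 + p 10 + p 11 ≤ k 0 + k 1 ∧
  p 6 + p 7 + p 8 + p 9 + p 11 ≤ k 0 + k 1 + k 2 ∧
  p 6 + p 8 + p 9 + p 10 + p 11 ≤ k 0 + k 1 + k 2 ∧
  p 8 + p 9 + p 10 ≤ k 1 + k 2 ∧
  p 3 + p 4 + p 5 + p 6 + p 11 ≤ k 0 + k 1 + k 3 ∧
  p 3 + p 4 + p 6 + p 10 + p 11 ≤ k 0 + k 1 + k 3 ∧
  p 3 + p 4 + p 10 ≤ k 1 + k 3 ∧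
  p 1 + p 3 + p 4 + p 8 + p 9 ≤ k 1 + k 2 + k 3 ∧
  p 3 + p 4 + p 8 + p 9 + p 10 ≤ k 1 + k 2 + k 3 ∧
  p 2 + p 3 + p 4 + p 5 + p 6 + p 8 + p 11 ≤ k 0 + k 1 + k 2 + k 3 ∧
  p 1 + p 2 + p 3 + p 4 + p 6 + p 8 + p 11 ≤ k 0 + k 1 + k 2 + k 3 ∧
  p 1 + p 2 + p 3 + p 6 + p 7 + p 8 + p 11 ≤ k 0 + k 1 + k 2 + k 3 ∧
  p 1 + p 3 + p 6 + p 7 + p 8 + p 9 + p 11 ≤ k 0 + k 1 + k 2 + k 3 ∧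
  p 3 + p 4 + p 6 + p 8 + p 9 + p 10 + p 11 ≤ k 0 + k 1 + k 2 + k 3 ∧
  p 1 + p 3 + p 4 + p 6 + p 8 + p 9 + p 11 ≤ k 0 + k 1 + k 2 + k 3 ∧
  p 0 + p 2 + p 3 + p 4 + p 5 + p 6 + p 7 + p 8 + p 10 ≤ k 0 + 2 * k 1 + k 2 + k 3 ∧
  p 0 + p 1 + p 2 + p 3 + p 4 + p 6 + p 7 + p 8 + p 10 ≤ k 0 + 2 * k 1 + k 2 + k 3 ∧
  p 2 + p 3 + p 4 + p 5 + p 6 + p 7 + p 8 + p 10 + p 11 ≤ k 0 + 2 * k 1 + k 2 + k 3 ∧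
  p 1 + p 2 + p 3 + p 4 + p 6 + p 7 + p 8 + p 10 + p 11 ≤ k 0 + 2 * k 1 + k 2 + k 3 ∧
  p 0 + p 1 + p 3 + p 4 + p 6 + p 7 + p 8 + p 9 + p 10 ≤ k 0 + 2 * k 1 + k 2 + k 3 ∧
  p 1 + p 3 + p 4 + p 6 + p 7 + p 8 + p 9 + p 10 + p 11 ≤ k 0 + 2 * k 1 + k 2 + k 3 ∧
  p 0 + p 3 + p 4 + p 5 + p 6 + p 7 + p 8 + p 9 + p 10 ≤ k 0 + 2 * k 1 + k 2 + k 3 ∧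
  p 3 + p 4 + p 5 + p 6 + p 7 + p 8 + p 9 + p 10 + p 11 ≤ k 0 + 2 * k 1 + k 2 + k 3 ∧
  p 1 + p 2 + p 3 + p 4 + p 6 + p 7 + 2 * p 8 + p 9 + p 10 + p 11 ≤ k 0 + 2 * k 1 + 2 * k 2 + k 3 ∧
  p 2 + p 3 + p 4 + p 5 + p 6 + p 7 + 2 * p 8 + p 9 + p 10 + p 11 ≤ k 0 + 2 * k 1 + 2 * k 2 + k 3 ∧
  p 0 + p 1 + p 2 + p 3 + p 4 + p 6 + p 7 + 2 * p 8 + p 9 + p 10 ≤ k 0 + 2 * k 1 + 2 * k 2 + k 3 ∧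
  p 0 + p 2 + p 3 + p 4 + p 5 + p 6 + p 7 + 2 * p 8 + p 9 + p 10 ≤ k 0 + 2 * k 1 + 2 * k 2 + k 3 ∧
  p 1 + p 3 + p 4 + p 6 + p 7 + 2 * p 8 + 2 * p 9 + p 10 + p 11 ≤ k 0 + 2 * k 1 + 2 * k 2 + k 3 ∧
  p 1 + p 2 + 2 * p 3 + p 4 + p 5 + p 6 + p 7 + p 8 + p 10 + p 11 ≤ k 0 + 2 * k 1 + k 2 + 2 * k 3 ∧
  p 1 + 2 * p 3 + p 4 + p 5 + p 6 + p 7 + p 8 + p 9 + p 10 + p 11 ≤ k 0 + 2 * k 1 + k 2 + 2 * k 3 ∧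
  p 0 + p 1 + p 2 + 2 * p 3 + p 4 + p 5 + p 6 + p 7 + p 8 + p 10 ≤ k 0 + 2 * k 1 + k 2 + 2 * k 3 ∧
  p 0 + p 1 + 2 * p 3 + p 4 + p 5 + p 6 + p 7 + p 8 + p 9 + p 10 ≤ k 0 + 2 * k 1 + k 2 + 2 * k 3 ∧
  p 1 + p 2 + 2 * p 3 + 2 * p 4 + p 5 + p 6 + p 8 + p 10 + p 11 ≤ k 0 + 2 * k 1 + k 2 + 2 * k 3 ∧
  p 1 + 2 * p 3 + 2 * p 4 + p 5 + p 6 + p 8 + p 9 + p 10 + p 11 ≤ k 0 + 2 * k 1 + k 2 + 2 * k 3 ∧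
  p 2 + p 3 + p 4 + p 5 + 2 * p 6 + p 7 + p 8 + p 10 + 2 * p 11 ≤ 2 * k 0 + 2 * k 1 + k 2 + k 3 ∧
  p 3 + p 4 + p 5 + 2 * p 6 + p 7 + p 8 + p 9 + p 10 + 2 * p 11 ≤ 2 * k 0 + 2 * k 1 + k 2 + k 3 ∧
  p 1 + p 2 + p 3 + p 4 + 2 * p 6 + p 7 + p 8 + p 10 + 2 * p 11 ≤ 2 * k 0 + 2 * k 1 + k 2 + k 3 ∧
  p 1 + p 3 + p 4 + 2 * p 6 + p 7 + p 8 + p 9 + p 10 + 2 * p 11 ≤ 2 * k 0 + 2 * k 1 + k 2 + k 3 ∧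
  p 0 + p 1 + p 2 + 2 * p 3 + p 4 + p 5 + p 6 + p 7 + 2 * p 8 + p 9 + p 10 ≤ k 0 + 2 * k 1 + 2 * k 2 + 2 * k 3 ∧
  p 1 + p 2 + 2 * p 3 + p 4 + p 5 + p 6 + p 7 + 2 * p 8 + p 9 + p 10 + p 11 ≤ k 0 + 2 * k 1 + 2 * k 2 + 2 * k 3 ∧
  p 1 + p 2 + 2 * p 3 + 2 * p 4 + p 5 + p 6 + 2 * p 8 + p 9 + p 10 + p 11 ≤ k 0 + 2 * k 1 + 2 * k 2 + 2 * k 3 ∧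
  p 1 + p 2 + 2 * p 3 + p 4 + p 5 + 2 * p 6 + p 7 + p 8 + p 10 + 2 * p 11 ≤ 2 * k 0 + 2 * k 1 + k 2 + 2 * k 3 ∧
  p 1 + 2 * p 3 + p 4 + p 5 + 2 * p 6 + p 7 + p 8 + p 9 + p 10 + 2 * p 11 ≤ 2 * k 0 + 2 * k 1 + k 2 + 2 * k 3 ∧
  p 1 + p 2 + 2 * p 3 + 2 * p 4 + p 5 + 2 * p 6 + p 8 + p 10 + 2 * p 11 ≤ 2 * k 0 + 2 * k 1 + k 2 + 2 * k 3 ∧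
  p 1 + 2 * p 3 + 2 * p 4 + p 5 + 2 * p 6 + p 8 + p 9 + p 10 + 2 * p 11 ≤ 2 * k 0 + 2 * k 1 + k 2 + 2 * k 3 ∧
  p 1 + p 2 + p 3 + p 4 + 2 * p 6 + p 7 + 2 * p 8 + p 9 + p 10 + 2 * p 11 ≤ 2 * k 0 + 2 * k 1 + 2 * k 2 + k 3 ∧
  p 2 + p 3 + p 4 + p 5 + 2 * p 6 + p 7 + 2 * p 8 + p 9 + p 10 + 2 * p 11 ≤ 2 * k 0 + 2 * k 1 + 2 * k 2 + k 3 ∧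
  p 1 + p 3 + p 4 + 2 * p 6 + p 7 + 2 * p 8 + 2 * p 9 + p 10 + 2 * p 11 ≤ 2 * k 0 + 2 * k 1 + 2 * k 2 + k 3 ∧
  p 1 + p 2 + 2 * p 3 + p 4 + p 5 + 2 * p 6 + p 7 + 2 * p 8 + p 9 + p 10 + 2 * p 11 ≤ 2 * k 0 + 2 * k 1 + 2 * k 2 + 2 * k 3 ∧
  p 1 + p 2 + 2 * p 3 + 2 * p 4 + p 5 + 2 * p 6 + 2 * p 8 + p 9 + p 10 + 2 * p 11 ≤ 2 * k 0 + 2 * k 1 + 2 * k 2 + 2 * k 3 ∧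
  p 1 + p 2 + 2 * p 3 + 2 * p 4 + p 5 + p 6 + p 7 + p 8 + 2 * p 10 + p 11 ≤ k 0 + 3 * k 1 + k 2 + 2 * k 3 ∧
  p 1 + 2 * p 3 + 2 * p 4 + p 5 + p 6 + p 7 + p 8 + p 9 + 2 * p 10 + p 11 ≤ k 0 + 3 * k 1 + k 2 + 2 * k 3 ∧
  p 0 + p 1 + p 2 + 2 * p 3 + 2 * p 4 + p 5 + p 6 + p 7 + p 8 + 2 * p 10 ≤ k 0 + 3 * k 1 + k 2 + 2 * k 3 ∧
  p 0 + p 1 + 2 * p 3 + 2 * p 4 + p 5 + p 6 + p 7 + p 8 + p 9 + 2 * p 10 ≤ k 0 + 3 * k 1 + k 2 + 2 * k 3 ∧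
  p 0 + p 1 + 2 * p 3 + 2 * p 4 + p 5 + p 6 + p 7 + 2 * p 8 + 2 * p 9 + 2 * p 10 ≤ k 0 + 3 * k 1 + 2 * k 2 + 2 * k 3 ∧
  p 1 + 2 * p 3 + 2 * p 4 + p 5 + p 6 + p 7 + 2 * p 8 + 2 * p 9 + 2 * p 10 + p 11 ≤ k 0 + 3 * k 1 + 2 * k 2 + 2 * k 3 ∧
  p 0 + p 1 + 2 * p 3 + 2 * p 4 + p 5 + 2 * p 6 + p 7 + p 8 + p 9 + 2 * p 10 + p 11 ≤ 2 * k 0 + 3 * k 1 + k 2 + 2 * k 3 ∧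
  p 0 + p 1 + p 2 + 2 * p 3 + 2 * p 4 + p 5 + 2 * p 6 + p 7 + p 8 + 2 * p 10 + p 11 ≤ 2 * k 0 + 3 * k 1 + k 2 + 2 * k 3 ∧
  p 0 + p 1 + 2 * p 3 + 2 * p 4 + p 5 + 2 * p 6 + p 7 + 2 * p 8 + 2 * p 9 + 2 * p 10 + p 11 ≤ 2 * k 0 + 3 * k 1 + 2 * k 2 + 2 * k 3 ∧
  p 1 + p 2 + 2 * p 3 + 2 * p 4 + p 5 + p 6 + p 7 + 3 * p 8 + 2 * p 9 + 2 * p 10 + p 11 ≤ k 0 + 3 * k 1 + 3 * k 2 + 2 * k 3 ∧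
  p 0 + p 1 + p 2 + 2 * p 3 + 2 * p 4 + p 5 + p 6 + p 7 + 3 * p 8 + 2 * p 9 + 2 * p 10 ≤ k 0 + 3 * k 1 + 3 * k 2 + 2 * k 3 ∧
  p 1 + p 2 + 2 * p 3 + 2 * p 4 + p 5 + 3 * p 6 + p 7 + p 8 + 2 * p 10 + 3 * p 11 ≤ 3 * k 0 + 3 * k 1 + k 2 + 2 * k 3 ∧
  p 1 + 2 * p 3 + 2 * p 4 + p 5 + 3 * p 6 + p 7 + p 8 + p 9 + 2 * p 10 + 3 * p 11 ≤ 3 * k 0 + 3 * k 1 + k 2 + 2 * k 3 ∧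
  p 1 + p 2 + 2 * p 3 + 2 * p 4 + p 5 + 3 * p 6 + p 7 + 3 * p 8 + 2 * p 9 + 2 * p 10 + 3 * p 11 ≤ 3 * k 0 + 3 * k 1 + 3 * k 2 + 2 * k 3 ∧
  p 0 + p 1 + p 2 + 2 * p 3 + 2 * p 4 + p 5 + 2 * p 6 + p 7 + 3 * p 8 + 2 * p 9 + 2 * p 10 + p 11 ≤ 2 * k 0 + 3 * k 1 + 3 * k 2 + 2 * k 3 ∧
  p 1 + 2 * p 3 + 2 * p 4 + p 5 + 3 * p 6 + p 7 + 2 * p 8 + 2 * p 9 + 2 * p 10 + 3 * p 11 ≤ 3 * k 0 + 3 * k 1 + 2 * k 2 + 2 * k 3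

/-- The 52 fundamental generators in (ℚ^4) × (ℚ^12). -/
def gens : Fin 52 → (Fin 4 → ℚ) × (Fin 12 → ℚ) :=
  ![
    (Pi.single 0 1, 0),
    (Pi.single 0 1, Pi.single 11 1),
    (Pi.single 0 1, Pi.single 7 1),
    (Pi.single 0 1, Pi.single 6 1),
    (Pi.single 0 1, Pi.single 5 1),
    (Pi.single 0 1, Pi.single 2 1),
    (Pi.single 0 1, Pi.single 0 1),
    (Pi.single 0 1, Pi.single 0 1 + Pi.single 11 1),
    (Pi.single 1 1, 0),
    (Pi.single 1 1, Pi.single 10 1),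
    (Pi.single 1 1, Pi.single 9 1),
    (Pi.single 1 1, Pi.single 7 1),
    (Pi.single 1 1, Pi.single 6 1),
    (Pi.single 1 1, Pi.single 5 1),
    (Pi.single 1 1, Pi.single 4 1),
    (Pi.single 1 1, Pi.single 2 1),
    (Pi.single 1 1, Pi.single 1 1),
    (Pi.single 1 1, Pi.single 0 1),
    (Pi.single 1 1, Pi.single 7 1 + Pi.single 10 1),
    (Pi.single 1 1, Pi.single 5 1 + Pi.single 10 1),
    (Pi.single 1 1, Pi.single 2 1 + Pi.single 10 1),
    (Pi.single 1 1, Pi.single 1 1 + Pi.single 10 1),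
    (Pi.single 1 1, Pi.single 0 1 + Pi.single 10 1),
    (Pi.single 1 1, Pi.single 5 1 + Pi.single 9 1),
    (Pi.single 1 1, Pi.single 2 1 + Pi.single 9 1),
    (Pi.single 1 1, Pi.single 0 1 + Pi.single 9 1),
    (Pi.single 1 1, Pi.single 5 1 + Pi.single 7 1),
    (Pi.single 1 1, Pi.single 4 1 + Pi.single 7 1),
    (Pi.single 1 1, Pi.single 0 1 + Pi.single 7 1),
    (Pi.single 1 1, Pi.single 0 1 + Pi.single 6 1),
    (Pi.single 1 1, Pi.single 1 1 + Pi.single 5 1),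
    (Pi.single 1 1, Pi.single 0 1 + Pi.single 5 1),
    (Pi.single 1 1, Pi.single 0 1 + Pi.single 4 1),
    (Pi.single 1 1, Pi.single 0 1 + Pi.single 2 1),
    (Pi.single 1 1, Pi.single 0 1 + Pi.single 1 1),
    (Pi.single 1 1, Pi.single 0 2),
    (Pi.single 2 1, 0),
    (Pi.single 2 1, Pi.single 9 1),
    (Pi.single 2 1, Pi.single 8 1),
    (Pi.single 2 1, Pi.single 7 1),
    (Pi.single 2 1, Pi.single 2 1),
    (Pi.single 2 1, Pi.single 1 1),
    (Pi.single 2 1, Pi.single 0 1),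
    (Pi.single 2 1, Pi.single 2 1 + Pi.single 9 1),
    (Pi.single 3 1, 0),
    (Pi.single 3 1, Pi.single 5 1),
    (Pi.single 3 1, Pi.single 4 1),
    (Pi.single 3 1, Pi.single 3 1),
    (Pi.single 3 1, Pi.single 2 1),
    (Pi.single 3 1, Pi.single 1 1),
    (Pi.single 3 1, Pi.single 0 1),
    (Pi.single 3 1, Pi.single 1 1 + Pi.single 5 1)]

/-- The cone of pairs (k, p) with nonnegative rational entries satisfying the 70 inequalities. -/
def ConeSet : Set ((Fin 4 → ℚ) × (Fin 12 → ℚ)) :=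
  {x | (∀ i, 0 ≤ x.1 i) ∧ (∀ j, 0 ≤ x.2 j) ∧ SatisfiesIneqs x.1 x.2}

open Finset

section InequalityCone

variable {ι K E : Type*} [Field K] [LinearOrder K] [AddCommGroup E] [Module K E]
  {φ : ι → Module.Dual K E} {J : Finset ι} {S : Set E} {x y r : E}

/-- The support of `x` relative to the functionals `φ i`, `i ∈ J`. On `inequalityCone φ J` it is
the set of inequalities that are strict at `x`, so it determines the smallest face containing
`x`. -/
def supportOn (φ : ι → Module.Dual K E) (J : Finset ι) (x : E) : Finset ι :=
  {i ∈ J | φ i x ≠ 0}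

lemma mem_supportOn {i : ι} : i ∈ supportOn φ J x ↔ i ∈ J ∧ φ i x ≠ 0 :=
  mem_filter

lemma supportOn_smul {c : K} (hc : c ≠ 0) : supportOn φ J (c • x) = supportOn φ J x := by
  ext i
  simp [mem_supportOn, hc]

lemma supportOn_zero : supportOn φ J (0 : E) = ∅ := by
  simp [supportOn]

variable [IsStrictOrderedRing K]

/-- The polyhedral cone cut out by the inequalities `0 ≤ φ i x` with `i ∈ J`. -/
def inequalityCone (φ : ι → Module.Dual K E) (J : Finset ι) : PointedCone K E :=
  PointedCone.dual LinearMap.id (φ '' J)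

/-- A set of nonzero vectors of the cone such that every nonzero vector of the cone has a support
containing that of a member of the set. -/
structure IsSupportDense (φ : ι → Module.Dual K E) (J : Finset ι) (S : Set E) : Prop where
  mem_cone : ∀ r ∈ S, r ∈ inequalityCone φ J
  ne_zero : ∀ r ∈ S, r ≠ 0
  exists_supportOn_subset :
    ∀ x ∈ inequalityCone φ J, x ≠ 0 → ∃ r ∈ S, supportOn φ J r ⊆ supportOn φ J x

lemma mem_inequalityCone : x ∈ inequalityCone φ J ↔ ∀ i ∈ J, 0 ≤ φ i x := by
  simp [inequalityCone]

lemma mem_inequalityCone_insert [DecidableEq ι] {j : ι} :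
    x ∈ inequalityCone φ (insert j J) ↔ 0 ≤ φ j x ∧ x ∈ inequalityCone φ J := by
  simp only [mem_inequalityCone, forall_mem_insert]

lemma supportOn_add [DecidableEq ι] (hx : x ∈ inequalityCone φ J) (hy : y ∈ inequalityCone φ J) :
    supportOn φ J (x + y) = supportOn φ J x ∪ supportOn φ J y := by
  ext i
  simp only [mem_union, mem_supportOn, map_add, ← and_or_left]
  refine and_congr_right fun hi ↦ ?_
  rw [Ne, add_eq_zero_iff_of_nonneg (mem_inequalityCone.1 hx i hi) (mem_inequalityCone.1 hy i hi)]
  tauto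

lemma exists_supportOn_subset_of_mem_hull (hS : ∀ r ∈ S, r ∈ inequalityCone φ J)
    (hx : x ∈ PointedCone.hull K S) (hx0 : x ≠ 0) :
    ∃ r ∈ S, supportOn φ J r ⊆ supportOn φ J x := by
  classical
  induction hx using Submodule.span_induction with
  | mem x hx => exact ⟨x, hx, Subset.rfl⟩
  | zero => exact absurd rfl hx0
  | add x y hx hy ihx ihy =>
    have hle : PointedCone.hull K S ≤ inequalityCone φ J := Submodule.span_le.2 hS
    rw [supportOn_add (hle hx) (hle hy)]
    by_cases h : x = 0
    · obtain ⟨r, hr, hsub⟩ := ihy (by simpa [h] using hx0)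
      exact ⟨r, hr, hsub.trans subset_union_right⟩
    · obtain ⟨r, hr, hsub⟩ := ihx h
      exact ⟨r, hr, hsub.trans subset_union_left⟩
  | smul c x _ ih =>
    obtain ⟨hc, hx⟩ := smul_ne_zero_iff.1 hx0
    obtain ⟨r, hr, hsub⟩ := ih hx
    exact ⟨r, hr, hsub.trans_eq (supportOn_smul fun h ↦ hc (Subtype.ext h)).symm⟩

lemma exists_sub_smul_supportOn_ssubset (hx : x ∈ inequalityCone φ J)
    (hr : r ∈ inequalityCone φ J) (hr0 : (supportOn φ J r).Nonempty)
    (hsub : supportOn φ J r ⊆ supportOn φ J x) :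
    ∃ t : K, 0 ≤ t ∧ x - t • r ∈ inequalityCone φ J ∧
      supportOn φ J (x - t • r) ⊂ supportOn φ J x := by
  obtain ⟨i, hi, hmin⟩ := exists_min_image _ (fun i ↦ φ i x / φ i r) hr0
  have hpos : ∀ k ∈ supportOn φ J r, 0 < φ k r := fun k hk ↦
    (mem_inequalityCone.1 hr k (mem_supportOn.1 hk).1).lt_of_ne' (mem_supportOn.1 hk).2
  refine ⟨φ i x / φ i r, ?_, ?_, ?_⟩
  · exact div_nonneg (mem_inequalityCone.1 hx i (mem_supportOn.1 hi).1) (hpos i hi).le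
  · refine mem_inequalityCone.2 fun k hk ↦ ?_
    simp only [map_sub, map_smul, smul_eq_mul, sub_nonneg]
    by_cases hkr : φ k r = 0
    · simpa [hkr] using mem_inequalityCone.1 hx k hk
    · have hk' : k ∈ supportOn φ J r := mem_supportOn.2 ⟨hk, hkr⟩
      exact (le_div_iff₀ (hpos k hk')).1 (hmin k hk')
  · refine (ssubset_iff_of_subset fun k hk ↦ ?_).2 ⟨i, hsub hi, fun h ↦ ?_⟩
    · by_contra hkx
      have hkr : k ∉ supportOn φ J r := fun h ↦ hkx (hsub h)
      simp_all [mem_supportOn]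
    · have := (hpos i hi).ne'
      simp_all [mem_supportOn]

theorem IsSupportDense.hull_eq (hS : IsSupportDense φ J S)
    (hJ : ∀ x : E, supportOn φ J x = ∅ → x = 0) :
    PointedCone.hull K S = inequalityCone φ J := by
  refine le_antisymm (Submodule.span_le.2 hS.mem_cone) fun x hx ↦ ?_
  induction hn : supportOn φ J x using Finset.strongInduction generalizing x with
  | H s ih =>
    subst hn
    by_cases hx0 : x = 0
    · exact hx0 ▸ zero_mem _
    obtain ⟨r, hr, hsub⟩ := hS.exists_supportOn_subset x hx hx0
    have hne : (supportOn φ J r).Nonempty :=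
      nonempty_iff_ne_empty.2 fun h ↦ hS.ne_zero r hr (hJ r h)
    obtain ⟨t, ht, hmem, hlt⟩ :=
      exists_sub_smul_supportOn_ssubset hx (hS.mem_cone r hr) hne hsub
    rw [← sub_add_cancel x (t • r)]
    exact add_mem (ih _ hlt _ hmem rfl)
      (PointedCone.smul_mem _ ht (PointedCone.subset_hull hr))

theorem isSupportDense_range_of_biorthogonal {κ : Type*} [Fintype κ] [DecidableEq κ]
    {e : κ ↪ ι} {w : κ → E} (hw : ∀ c d, φ (e c) (w d) = if c = d then 1 else 0)
    (hJ : ∀ x : E, supportOn φ (univ.map e) x = ∅ → x = 0) :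
    IsSupportDense φ (univ.map e) (Set.range w) where
  mem_cone := by
    rintro _ ⟨d, rfl⟩
    refine mem_inequalityCone.2 fun i hi ↦ ?_
    obtain ⟨c, -, rfl⟩ := mem_map.1 hi
    rw [hw]
    split_ifs <;> simp
  ne_zero := by
    rintro _ ⟨d, rfl⟩ h
    simpa [h] using hw d d
  exists_supportOn_subset x _ hx0 := by
    obtain ⟨i, hi⟩ := nonempty_iff_ne_empty.2 (mt (hJ x) hx0)
    obtain ⟨c, -, rfl⟩ := mem_map.1 (mem_supportOn.1 hi).1
    refine ⟨w c, ⟨c, rfl⟩, fun k hk ↦ ?_⟩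
    obtain ⟨hk, hne⟩ := mem_supportOn.1 hk
    obtain ⟨d, -, rfl⟩ := mem_map.1 hk
    rw [hw, Ne, ite_eq_right_iff, Classical.not_imp] at hne
    exact hne.1 ▸ hi

end InequalityCone

section DoubleDescription

variable {K E : Type*} [Field K] [LinearOrder K] [IsStrictOrderedRing K]
  [AddCommGroup E] [Module K E]

/-- The step of the double description method: generators of the part of the cone hull of `S`
where `f` is nonnegative. -/
def doubleDescription (f : Module.Dual K E) (S : Set E) : Set E :=
  {r ∈ S | 0 ≤ f r} ∪ {x | ∃ p ∈ S, ∃ q ∈ S, 0 < f p ∧ f q < 0 ∧ x = f p • q - f q • p}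

variable {f : Module.Dual K E} {S : Set E} {x u v : E}

lemma smul_sub_smul_mem_hull_doubleDescription
    (hu : u ∈ PointedCone.hull K {r ∈ S | 0 ≤ f r})
    (hv : v ∈ PointedCone.hull K {r ∈ S | f r < 0}) :
    f u • v - f v • u ∈ PointedCone.hull K (doubleDescription f S) := by
  have hleft : ∀ q ∈ S, f q < 0 →
      f u • q - f q • u ∈ PointedCone.hull K (doubleDescription f S) := by
    intro q hq hfq
    have hle : PointedCone.hull K {r ∈ S | 0 ≤ f r} ≤
        (PointedCone.hull K (doubleDescription f S)).comap
          (f.smulRight q - f q • LinearMap.id) := by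
      refine Submodule.span_le.2 fun p hp ↦ ?_
      simp only [SetLike.mem_coe, PointedCone.mem_comap, LinearMap.sub_apply,
        LinearMap.smulRight_apply, LinearMap.smul_apply, LinearMap.id_apply]
      obtain hfp | hfp := hp.2.eq_or_lt
      · rw [← hfp, zero_smul, zero_sub, ← neg_smul]
        exact PointedCone.smul_mem _ (neg_nonneg.2 hfq.le) (PointedCone.subset_hull (.inl hp))
      · exact PointedCone.subset_hull (.inr ⟨p, hp.1, q, hq, hfp, hfq, rfl⟩)
    simpa [PointedCone.mem_comap] using hle hu
  have hright : PointedCone.hull K {r ∈ S | f r < 0} ≤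
      (PointedCone.hull K (doubleDescription f S)).comap
        (f u • LinearMap.id - f.smulRight u) :=
    Submodule.span_le.2 fun q hq ↦ by simpa [PointedCone.mem_comap] using hleft q hq.1 hq.2
  simpa [PointedCone.mem_comap] using hright hv

lemma eq_zero_or_neg_of_mem_hull (hv : v ∈ PointedCone.hull K {r ∈ S | f r < 0}) :
    v = 0 ∨ f v < 0 := by
  induction hv using Submodule.span_induction with
  | mem r hr => exact .inr hr.2
  | zero => exact .inl rfl
  | add p q _ _ hp hq =>
    rcases hp with rfl | hp <;> rcases hq with rfl | hq <;> simp_all [add_neg]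
  | smul c p _ hp =>
    rcases hp with rfl | hp
    · simp
    · obtain rfl | hc := eq_zero_or_pos c
      · simp
      · right
        rw [← Nonneg.coe_smul, map_smul, smul_eq_mul]
        exact mul_neg_of_pos_of_neg hc hp

theorem mem_hull_doubleDescription (hx : x ∈ PointedCone.hull K S) (hfx : 0 ≤ f x) :
    x ∈ PointedCone.hull K (doubleDescription f S) := by
  have hsplit : S = {r ∈ S | 0 ≤ f r} ∪ {r ∈ S | f r < 0} := by
    ext r
    have := le_or_gt 0 (f r)
    simp only [Set.mem_union, Set.mem_ofPred_eq]
    tauto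
  have hkeep : PointedCone.hull K {r ∈ S | 0 ≤ f r} ≤ PointedCone.hull K (doubleDescription f S) :=
    Submodule.span_mono Set.subset_union_left
  rw [hsplit, PointedCone.hull, Submodule.span_union] at hx
  obtain ⟨u, hu, v, hv, rfl⟩ := Submodule.mem_sup.1 hx
  obtain rfl | hfv := eq_zero_or_neg_of_mem_hull hv
  · simpa using hkeep hu
  have hfu : 0 < f u := by
    rw [map_add] at hfx
    linarith
  rw [← PointedCone.smul_mem_iff _ hfu]
  have hdecomp : f u • (u + v) = f (u + v) • u + (f u • v - f v • u) := by
    rw [map_add]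
    module
  rw [hdecomp]
  exact add_mem (PointedCone.smul_mem _ hfx (hkeep hu))
    (smul_sub_smul_mem_hull_doubleDescription hu hv)

end DoubleDescription

section Step

variable {ι K E : Type*} [Field K] [LinearOrder K] [IsStrictOrderedRing K]
  [AddCommGroup E] [Module K E] {φ : ι → Module.Dual K E} {J : Finset ι} {S T : Set E} {j : ι}

lemma supportOn_insert_smul_sub_smul [DecidableEq ι] {p q : E}
    (hp : p ∈ inequalityCone φ J) (hq : q ∈ inequalityCone φ J)
    (hfp : 0 < φ j p) (hfq : φ j q < 0) :
    supportOn φ (insert j J) (φ j p • q - φ j q • p) = supportOn φ J p ∪ supportOn φ J q := by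
  have hj : φ j (φ j p • q - φ j q • p) = 0 := by simp [mul_comm]
  rw [supportOn, filter_insert, if_neg (by simp [hj])]
  change supportOn φ J _ = _
  rw [sub_eq_add_neg, ← neg_smul, supportOn_add (PointedCone.smul_mem _ hfp.le hq)
    (PointedCone.smul_mem _ (neg_nonneg.2 hfq.le) hp), supportOn_smul hfp.ne',
    supportOn_smul (neg_ne_zero.2 hfq.ne), union_comm]

lemma IsSupportDense.mem_cone_of_mem_doubleDescription [DecidableEq ι] (hS : IsSupportDense φ J S) :
    ∀ x ∈ doubleDescription (φ j) S, x ∈ inequalityCone φ (insert j J) := by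
  rintro x (⟨hx, hfx⟩ | ⟨p, hp, q, hq, hfp, hfq, rfl⟩)
  · exact mem_inequalityCone_insert.2 ⟨hfx, hS.mem_cone x hx⟩
  · refine mem_inequalityCone_insert.2 ⟨?_, ?_⟩
    · simp [mul_comm]
    · rw [sub_eq_add_neg, ← neg_smul]
      exact add_mem (PointedCone.smul_mem _ hfp.le (hS.mem_cone q hq))
        (PointedCone.smul_mem _ (neg_nonneg.2 hfq.le) (hS.mem_cone p hp))

lemma IsSupportDense.ne_zero_of_mem_doubleDescription (hS : IsSupportDense φ J S)
    (hJ : ∀ x : E, supportOn φ J x = ∅ → x = 0) :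
    ∀ x ∈ doubleDescription (φ j) S, x ≠ 0 := by
  classical
  rintro x (⟨hx, -⟩ | ⟨p, hp, q, hq, hfp, hfq, rfl⟩)
  · exact hS.ne_zero x hx
  · intro hzero
    have hsupp := supportOn_insert_smul_sub_smul (hS.mem_cone p hp) (hS.mem_cone q hq) hfp hfq
    rw [hzero, supportOn_zero, eq_comm, union_eq_empty] at hsupp
    simp [hJ p hsupp.1] at hfp

theorem IsSupportDense.insert [DecidableEq ι] (hS : IsSupportDense φ J S)
    (hJ : ∀ x : E, supportOn φ J x = ∅ → x = 0) (hT : T ⊆ doubleDescription (φ j) S)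
    (hdense : ∀ r ∈ doubleDescription (φ j) S,
      ∃ t ∈ T, supportOn φ (insert j J) t ⊆ supportOn φ (insert j J) r) :
    IsSupportDense φ (insert j J) T where
  mem_cone r hr := hS.mem_cone_of_mem_doubleDescription r (hT hr)
  ne_zero r hr := hS.ne_zero_of_mem_doubleDescription hJ r (hT hr)
  exists_supportOn_subset x hx hx0 := by
    obtain ⟨hfx, hxJ⟩ := mem_inequalityCone_insert.1 hx
    have hull := mem_hull_doubleDescription (hS.hull_eq hJ ▸ hxJ) hfx
    obtain ⟨r, hr, hrx⟩ :=
      exists_supportOn_subset_of_mem_hull hS.mem_cone_of_mem_doubleDescription hull hx0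
    obtain ⟨t, ht, htr⟩ := hdense r hr
    exact ⟨t, ht, htr.trans hrx⟩

end Step

section Algorithm

/-- A ray of the double description method: a vector together with the bit mask of its support. -/
structure Ray (V : Type*) where
  vec : V
  mask : ℕ

/-- The mask of `r` encodes the support of its vector relative to the functionals `ψ i`, `i ∈ J`,
the index `i` being represented by the bit `bit i`. -/
def Ray.MaskEncodes {ι V : Type*} (ψ : ι → V → ℤ) (bit : ι → ℕ) (J : Finset ι) (r : Ray V) :
    Prop :=
  ∀ i, r.mask.testBit (bit i) = true ↔ i ∈ J ∧ ψ i r.vec ≠ 0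

/-- Add `r` to a list of rays unless its support contains the support of a ray of the list. -/
def addMinimal {V : Type*} (R : List (Ray V)) (r : Ray V) : List (Ray V) :=
  if R.any fun s ↦ s.mask &&& r.mask == s.mask then R else r :: R

/-- The positive combination of two rays on which a functional vanishes, given its values `a > 0`
at `p` and `b < 0` at `q`. -/
def Ray.combine {V : Type*} [AddCommGroup V] (a b : ℤ) (p q : Ray V) : Ray V :=
  ⟨a • q.vec - b • p.vec, p.mask ||| q.mask⟩

/-- One step of the double description method: the rays after the inequality `0 ≤ ψ j x` has been
imposed. Combinations whose support contains that of another ray on which `ψ j` vanishes are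
discarded. -/
def imposeInequality {ι V : Type*} [AddCommGroup V] (ψ : ι → V → ℤ) (bit : ι → ℕ)
    (R : List (Ray V)) (j : ι) : List (Ray V) :=
  let pos := R.filter fun r ↦ 0 < ψ j r.vec
  let neg := R.filter fun r ↦ ψ j r.vec < 0
  let tight := R.filter fun r ↦ ψ j r.vec = 0
  pos.map (fun r ↦ ⟨r.vec, r.mask ||| 2 ^ bit j⟩) ++
    ((pos.product neg).map fun pq ↦
      pq.1.combine (ψ j pq.1.vec) (ψ j pq.2.vec) pq.2).foldl addMinimal tight

section addMinimal

variable {V : Type*} {R l : List (Ray V)} {r : Ray V}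

lemma subset_foldl_addMinimal : R ⊆ l.foldl addMinimal R := by
  induction l generalizing R with
  | nil => exact List.Subset.refl R
  | cons s l ih =>
    refine List.Subset.trans ?_ ih
    unfold addMinimal
    split_ifs <;> simp

lemma mem_or_mem_of_mem_foldl_addMinimal (hr : r ∈ l.foldl addMinimal R) : r ∈ R ∨ r ∈ l := by
  induction l generalizing R with
  | nil => exact .inl hr
  | cons s l ih =>
    have hadd : r ∈ addMinimal R s → r ∈ R ∨ r = s := by
      unfold addMinimal
      split_ifs <;> simp +contextual [or_comm]
    have := ih hr
    simp only [List.mem_cons]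
    tauto

lemma exists_mem_foldl_addMinimal_mask_le (hr : r ∈ l) :
    ∃ s ∈ l.foldl addMinimal R, s.mask &&& r.mask = s.mask := by
  induction l generalizing R with
  | nil => simp at hr
  | cons s l ih =>
    obtain rfl | hr := List.mem_cons.1 hr
    · have hadd : ∃ s ∈ addMinimal R r, s.mask &&& r.mask = s.mask := by
        unfold addMinimal
        split_ifs with h
        · simpa using h
        · exact ⟨r, List.mem_cons_self, Nat.and_self _⟩
      obtain ⟨s, hs, hsr⟩ := hadd
      exact ⟨s, subset_foldl_addMinimal (l := l) hs, hsr⟩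
    · exact ih hr

end addMinimal

section imposeInequality

variable {ι V : Type*} [AddCommGroup V] {ψ : ι → V → ℤ} {bit : ι → ℕ} {R : List (Ray V)}
  {p q r : Ray V} {j : ι}

lemma mem_imposeInequality (hr : r ∈ imposeInequality ψ bit R j) :
    (∃ s ∈ R, 0 < ψ j s.vec ∧ r = ⟨s.vec, s.mask ||| 2 ^ bit j⟩) ∨ (r ∈ R ∧ ψ j r.vec = 0) ∨
      ∃ p ∈ R, ∃ q ∈ R, 0 < ψ j p.vec ∧ ψ j q.vec < 0 ∧
        r = p.combine (ψ j p.vec) (ψ j q.vec) q := by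
  simp only [imposeInequality, List.mem_append, List.mem_map, List.mem_filter,
    decide_eq_true_eq] at hr
  obtain ⟨s, ⟨hs, hsj⟩, rfl⟩ | hr := hr
  · exact .inl ⟨s, hs, hsj, rfl⟩
  obtain hr | hr := mem_or_mem_of_mem_foldl_addMinimal hr
  · simp only [List.mem_filter, decide_eq_true_eq] at hr
    exact .inr (.inl hr)
  · simp only [List.mem_map, Prod.exists, List.pair_mem_product, List.mem_filter,
      decide_eq_true_eq] at hr
    obtain ⟨p, q, ⟨⟨hp, hpj⟩, hq, hqj⟩, rfl⟩ := hr
    exact .inr (.inr ⟨p, hp, q, hq, hpj, hqj, rfl⟩)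

lemma raise_mem_imposeInequality (hr : r ∈ R) (hj : 0 < ψ j r.vec) :
    ⟨r.vec, r.mask ||| 2 ^ bit j⟩ ∈ imposeInequality ψ bit R j :=
  List.mem_append_left _ (List.mem_map.2 ⟨r, List.mem_filter.2 ⟨hr, by simpa using hj⟩, rfl⟩)

lemma mem_imposeInequality_of_eq_zero (hr : r ∈ R) (hj : ψ j r.vec = 0) :
    r ∈ imposeInequality ψ bit R j :=
  List.mem_append_right _ (subset_foldl_addMinimal (List.mem_filter.2 ⟨hr, by simpa using hj⟩))

lemma exists_mem_imposeInequality_mask_le_combine (hp : p ∈ R) (hq : q ∈ R)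
    (hpj : 0 < ψ j p.vec) (hqj : ψ j q.vec < 0) :
    ∃ s ∈ imposeInequality ψ bit R j,
      s.mask &&& (p.combine (ψ j p.vec) (ψ j q.vec) q).mask = s.mask := by
  have hmem : p.combine (ψ j p.vec) (ψ j q.vec) q ∈
      ((R.filter fun r ↦ 0 < ψ j r.vec).product (R.filter fun r ↦ ψ j r.vec < 0)).map fun pq ↦
        pq.1.combine (ψ j pq.1.vec) (ψ j pq.2.vec) pq.2 :=
    List.mem_map.2 ⟨(p, q), by simp [List.pair_mem_product, hp, hq, hpj, hqj], rfl⟩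
  obtain ⟨s, hs, hle⟩ := exists_mem_foldl_addMinimal_mask_le hmem
  exact ⟨s, List.mem_append_right _ hs, hle⟩

end imposeInequality

namespace Ray

variable {ι V : Type*} {ψ : ι → V → ℤ} {bit : ι → ℕ} {J : Finset ι} {p q r s : Ray V} {j : ι}

lemma maskEncodes_two_pow (hbit : Function.Injective bit) {v : V} (hj : j ∈ J)
    (hv : ∀ i ∈ J, ψ i v ≠ 0 ↔ i = j) :
    (⟨v, 2 ^ bit j⟩ : Ray V).MaskEncodes ψ bit J := by
  intro i
  rw [Nat.testBit_two_pow, decide_eq_true_eq, hbit.eq_iff, eq_comm]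
  exact ⟨by rintro rfl; exact ⟨hj, (hv i hj).2 rfl⟩, fun h ↦ (hv i h.1).1 h.2⟩

section Insert

variable [DecidableEq ι]

lemma MaskEncodes.raise (hbit : Function.Injective bit) (hr : r.MaskEncodes ψ bit J)
    (hj : 0 < ψ j r.vec) :
    (⟨r.vec, r.mask ||| 2 ^ bit j⟩ : Ray V).MaskEncodes ψ bit (insert j J) := by
  intro i
  rw [Nat.testBit_or, Nat.testBit_two_pow, Bool.or_eq_true, hr i, mem_insert]
  by_cases hij : i = j
  · simp [hij, hj.ne']
  · simp [hij, hbit.ne (Ne.symm hij)]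

lemma MaskEncodes.insert_of_eq_zero (hr : r.MaskEncodes ψ bit J) (hj : ψ j r.vec = 0) :
    r.MaskEncodes ψ bit (insert j J) := by
  intro i
  rw [hr i, mem_insert]
  by_cases hij : i = j
  · simp [hij, hj]
  · simp [hij]

end Insert

lemma map_combine_vec [AddCommGroup V] {K E : Type*} [CommRing K] [AddCommGroup E] [Module K E]
    {φ : ι → Module.Dual K E} {g : V →+ E} (hψ : ∀ i v, φ i (g v) = ψ i v) :
    g (p.combine (ψ j p.vec) (ψ j q.vec) q).vec =
      φ j (g p.vec) • g q.vec - φ j (g q.vec) • g p.vec := by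
  simp [combine, hψ, Int.cast_smul_eq_zsmul]

namespace MaskEncodes

variable {K E : Type*} [Field K] [LinearOrder K] [IsStrictOrderedRing K] [AddCommGroup E]
  [Module K E] {φ : ι → Module.Dual K E}

lemma mem_supportOn_iff {g : V → E} (hψ : ∀ i v, φ i (g v) = ψ i v) (hr : r.MaskEncodes ψ bit J)
    (i : ι) : i ∈ supportOn φ J (g r.vec) ↔ r.mask.testBit (bit i) = true := by
  rw [hr i, mem_supportOn, hψ, Int.cast_ne_zero]

lemma supportOn_subset {g : V → E} (hψ : ∀ i v, φ i (g v) = ψ i v) (hr : r.MaskEncodes ψ bit J)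
    (hs : s.MaskEncodes ψ bit J) (h : r.mask &&& s.mask = r.mask) :
    supportOn φ J (g r.vec) ⊆ supportOn φ J (g s.vec) := by
  intro i hi
  rw [hr.mem_supportOn_iff hψ, ← h, Nat.testBit_and, Bool.and_eq_true] at hi
  exact (hs.mem_supportOn_iff hψ i).2 hi.2

lemma combine [AddCommGroup V] [DecidableEq ι] {g : V →+ E} (hψ : ∀ i v, φ i (g v) = ψ i v)
    (hp : p.MaskEncodes ψ bit J) (hq : q.MaskEncodes ψ bit J)
    (hpC : g p.vec ∈ inequalityCone φ J) (hqC : g q.vec ∈ inequalityCone φ J)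
    (hpj : 0 < ψ j p.vec) (hqj : ψ j q.vec < 0) :
    (p.combine (ψ j p.vec) (ψ j q.vec) q).MaskEncodes ψ bit (insert j J) := by
  intro i
  have hsupp := supportOn_insert_smul_sub_smul (j := j) hpC hqC (by simpa [hψ] using hpj)
    (by simpa [hψ] using hqj)
  rw [← map_combine_vec hψ] at hsupp
  rw [← Int.cast_ne_zero (α := K), ← hψ, ← mem_supportOn, hsupp, mem_union,
    hp.mem_supportOn_iff hψ, hq.mem_supportOn_iff hψ, ← Bool.or_eq_true, ← Nat.testBit_or,
    Ray.combine]

end MaskEncodes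

end Ray

section IsRayList

variable {ι V K E : Type*} [AddCommGroup V] [Field K] [LinearOrder K] [IsStrictOrderedRing K]
  [AddCommGroup E] [Module K E] {φ : ι → Module.Dual K E} {ψ : ι → V → ℤ} {bit : ι → ℕ}
  {g : V →+ E} {J : Finset ι} {R : List (Ray V)} {p q r : Ray V} {j : ι}

/-- The rays in `R` have correct masks, and their vectors, transported by `g`, form a support dense
subset of the cone cut out by the inequalities in `J`. -/
structure IsRayList (φ : ι → Module.Dual K E) (ψ : ι → V → ℤ) (bit : ι → ℕ) (g : V →+ E)
    (J : Finset ι) (R : List (Ray V)) : Prop where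
  maskEncodes : ∀ r ∈ R, r.MaskEncodes ψ bit J
  isSupportDense : IsSupportDense φ J ((fun r ↦ g r.vec) '' {r | r ∈ R})

lemma IsRayList.map_vec_mem_inequalityCone (hR : IsRayList φ ψ bit g J R) (hr : r ∈ R) :
    g r.vec ∈ inequalityCone φ J :=
  hR.isSupportDense.mem_cone _ ⟨r, hr, rfl⟩

theorem isRayList_map_of_biorthogonal {κ : Type*} [Fintype κ] [DecidableEq κ] {e : κ ↪ ι}
    {v : κ → V} {l : List κ} (hψ : ∀ i v, φ i (g v) = ψ i v) (hbit : Function.Injective bit)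
    (hJ : ∀ x : E, supportOn φ (univ.map e) x = ∅ → x = 0)
    (hv : ∀ c d, ψ (e c) (v d) = if c = d then 1 else 0) (hl : ∀ c, c ∈ l) :
    IsRayList φ ψ bit g (univ.map e) (l.map fun c ↦ ⟨v c, 2 ^ bit (e c)⟩) where
  maskEncodes := by
    simp only [List.forall_mem_map]
    intro c _
    refine Ray.maskEncodes_two_pow hbit (mem_map_of_mem e (mem_univ c)) fun i hi ↦ ?_
    obtain ⟨d, -, rfl⟩ := mem_map.1 hi
    simp [hv]
  isSupportDense := by
    have himage : (fun r : Ray V ↦ g r.vec) '' {r | r ∈ l.map fun c ↦ ⟨v c, 2 ^ bit (e c)⟩} =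
        Set.range fun c ↦ g (v c) := by
      ext x
      simp [hl]
    rw [himage]
    exact isSupportDense_range_of_biorthogonal (fun c d ↦ by simp [hψ, hv]) hJ

lemma map_vec_mem_doubleDescription (hψ : ∀ i v, φ i (g v) = ψ i v)
    (hr : r ∈ imposeInequality ψ bit R j) :
    g r.vec ∈ doubleDescription (φ j) ((fun r ↦ g r.vec) '' {r | r ∈ R}) := by
  obtain ⟨s, hs, hsj, rfl⟩ | ⟨hr, hrj⟩ | ⟨p, hp, q, hq, hpj, hqj, rfl⟩ := mem_imposeInequality hr
  · exact .inl ⟨⟨s, hs, rfl⟩, by simpa [hψ] using hsj.le⟩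
  · exact .inl ⟨⟨r, hr, rfl⟩, by simp [hψ, hrj]⟩
  · exact .inr ⟨_, ⟨p, hp, rfl⟩, _, ⟨q, hq, rfl⟩, by simpa [hψ] using hpj,
      by simpa [hψ] using hqj, Ray.map_combine_vec hψ⟩

variable [DecidableEq ι]

lemma IsRayList.maskEncodes_of_mem_imposeInequality (hR : IsRayList φ ψ bit g J R)
    (hψ : ∀ i v, φ i (g v) = ψ i v) (hbit : Function.Injective bit)
    (hr : r ∈ imposeInequality ψ bit R j) : r.MaskEncodes ψ bit (insert j J) := by
  obtain ⟨s, hs, hsj, rfl⟩ | ⟨hr, hrj⟩ | ⟨p, hp, q, hq, hpj, hqj, rfl⟩ := mem_imposeInequality hr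
  · exact (hR.maskEncodes s hs).raise hbit hsj
  · exact (hR.maskEncodes r hr).insert_of_eq_zero hrj
  · exact (hR.maskEncodes p hp).combine hψ (hR.maskEncodes q hq) (hR.map_vec_mem_inequalityCone hp)
      (hR.map_vec_mem_inequalityCone hq) hpj hqj

lemma IsRayList.exists_supportOn_subset_combine (hR : IsRayList φ ψ bit g J R)
    (hψ : ∀ i v, φ i (g v) = ψ i v) (hbit : Function.Injective bit) (hp : p ∈ R) (hq : q ∈ R)
    (hpj : 0 < ψ j p.vec) (hqj : ψ j q.vec < 0) :
    ∃ s ∈ imposeInequality ψ bit R j, supportOn φ (insert j J) (g s.vec) ⊆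
      supportOn φ (insert j J) (g (p.combine (ψ j p.vec) (ψ j q.vec) q).vec) := by
  obtain ⟨s, hs, hle⟩ := exists_mem_imposeInequality_mask_le_combine (bit := bit) hp hq hpj hqj
  have hcombine := (hR.maskEncodes p hp).combine hψ (hR.maskEncodes q hq)
    (hR.map_vec_mem_inequalityCone hp) (hR.map_vec_mem_inequalityCone hq) hpj hqj
  have hencodes := hR.maskEncodes_of_mem_imposeInequality hψ hbit hs
  exact ⟨s, hs, hencodes.supportOn_subset hψ hcombine hle⟩

theorem IsRayList.insert (hR : IsRayList φ ψ bit g J R) (hψ : ∀ i v, φ i (g v) = ψ i v)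
    (hbit : Function.Injective bit) (hJ : ∀ x : E, supportOn φ J x = ∅ → x = 0) :
    IsRayList φ ψ bit g (insert j J) (imposeInequality ψ bit R j) where
  maskEncodes r hr := hR.maskEncodes_of_mem_imposeInequality hψ hbit hr
  isSupportDense := by
    refine hR.isSupportDense.insert hJ ?_ ?_
    · rintro _ ⟨r, hr, rfl⟩
      exact map_vec_mem_doubleDescription hψ hr
    · rintro _ (⟨⟨r, hr, rfl⟩, hrj⟩ | ⟨_, ⟨p, hp, rfl⟩, _, ⟨q, hq, rfl⟩, hpj, hqj, rfl⟩)
      · obtain hrj | hrj := hrj.eq_or_lt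
        · have hrj : ψ j r.vec = 0 := by simpa [hψ] using hrj.symm
          exact ⟨_, ⟨r, mem_imposeInequality_of_eq_zero hr hrj, rfl⟩, Subset.rfl⟩
        · have hrj : 0 < ψ j r.vec := by simpa [hψ] using hrj
          exact ⟨_, ⟨_, raise_mem_imposeInequality hr hrj, rfl⟩, Subset.rfl⟩
      · obtain ⟨s, hs, hsub⟩ := hR.exists_supportOn_subset_combine (j := j) hψ hbit hp hq
          (by simpa [hψ] using hpj) (by simpa [hψ] using hqj)
        exact ⟨_, ⟨s, hs, rfl⟩, Ray.map_combine_vec hψ ▸ hsub⟩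

theorem IsRayList.foldl_imposeInequality (hR : IsRayList φ ψ bit g J R)
    (hψ : ∀ i v, φ i (g v) = ψ i v) (hbit : Function.Injective bit)
    (hJ : ∀ x : E, supportOn φ J x = ∅ → x = 0) (l : List ι) :
    IsRayList φ ψ bit g (l.toFinset ∪ J) (l.foldl (imposeInequality ψ bit) R) := by
  induction l generalizing J R with
  | nil => simpa using hR
  | cons j l ih =>
    have hJ' : ∀ x : E, supportOn φ (Insert.insert j J) x = ∅ → x = 0 := fun x hx ↦
      hJ x (subset_empty.1 (hx ▸ filter_subset_filter _ (subset_insert j J)))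
    rw [List.toFinset_cons, insert_union, ← union_insert]
    exact ih (hR.insert hψ hbit hJ) hJ'

end IsRayList

end Algorithm

lemma mem_hull_range_iff {ι K E : Type*} [Fintype ι] [Semiring K] [PartialOrder K]
    [IsOrderedRing K] [AddCommMonoid E] [Module K E] {v : ι → E} {x : E} :
    x ∈ PointedCone.hull K (Set.range v) ↔
      ∃ c : ι → K, (∀ i, 0 ≤ c i) ∧ x = ∑ i, c i • v i := by
  rw [Submodule.mem_span_range_iff_exists_fun]
  constructor
  · rintro ⟨c, rfl⟩
    exact ⟨fun i ↦ c i, fun i ↦ (c i).2, rfl⟩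
  · rintro ⟨c, hc, rfl⟩
    exact ⟨fun i ↦ ⟨c i, hc i⟩, rfl⟩

section Cone

/-- The inequalities of `SatisfiesIneqs`, in their order: `(a, b)` stands for
`∑ j ∈ b, p j ≤ ∑ i ∈ a, k i`, an index being repeated according to its coefficient. -/
def inequalityTerms : Fin 70 → List (Fin 4) × List (Fin 12) := ![
  ([0], [11]),
  ([1], [10]),
  ([2], [8]),
  ([3], [3]),
  ([0, 1], [6, 10, 11]),
  ([0, 1, 2], [6, 7, 8, 9, 11]),
  ([0, 1, 2], [6, 8, 9, 10, 11]),
  ([1, 2], [8, 9, 10]),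
  ([0, 1, 3], [3, 4, 5, 6, 11]),
  ([0, 1, 3], [3, 4, 6, 10, 11]),
  ([1, 3], [3, 4, 10]),
  ([1, 2, 3], [1, 3, 4, 8, 9]),
  ([1, 2, 3], [3, 4, 8, 9, 10]),
  ([0, 1, 2, 3], [2, 3, 4, 5, 6, 8, 11]),
  ([0, 1, 2, 3], [1, 2, 3, 4, 6, 8, 11]),
  ([0, 1, 2, 3], [1, 2, 3, 6, 7, 8, 11]),
  ([0, 1, 2, 3], [1, 3, 6, 7, 8, 9, 11]),
  ([0, 1, 2, 3], [3, 4, 6, 8, 9, 10, 11]),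
  ([0, 1, 2, 3], [1, 3, 4, 6, 8, 9, 11]),
  ([0, 1, 1, 2, 3], [0, 2, 3, 4, 5, 6, 7, 8, 10]),
  ([0, 1, 1, 2, 3], [0, 1, 2, 3, 4, 6, 7, 8, 10]),
  ([0, 1, 1, 2, 3], [2, 3, 4, 5, 6, 7, 8, 10, 11]),
  ([0, 1, 1, 2, 3], [1, 2, 3, 4, 6, 7, 8, 10, 11]),
  ([0, 1, 1, 2, 3], [0, 1, 3, 4, 6, 7, 8, 9, 10]),
  ([0, 1, 1, 2, 3], [1, 3, 4, 6, 7, 8, 9, 10, 11]),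
  ([0, 1, 1, 2, 3], [0, 3, 4, 5, 6, 7, 8, 9, 10]),
  ([0, 1, 1, 2, 3], [3, 4, 5, 6, 7, 8, 9, 10, 11]),
  ([0, 1, 1, 2, 2, 3], [1, 2, 3, 4, 6, 7, 8, 8, 9, 10, 11]),
  ([0, 1, 1, 2, 2, 3], [2, 3, 4, 5, 6, 7, 8, 8, 9, 10, 11]),
  ([0, 1, 1, 2, 2, 3], [0, 1, 2, 3, 4, 6, 7, 8, 8, 9, 10]),
  ([0, 1, 1, 2, 2, 3], [0, 2, 3, 4, 5, 6, 7, 8, 8, 9, 10]),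
  ([0, 1, 1, 2, 2, 3], [1, 3, 4, 6, 7, 8, 8, 9, 9, 10, 11]),
  ([0, 1, 1, 2, 3, 3], [1, 2, 3, 3, 4, 5, 6, 7, 8, 10, 11]),
  ([0, 1, 1, 2, 3, 3], [1, 3, 3, 4, 5, 6, 7, 8, 9, 10, 11]),
  ([0, 1, 1, 2, 3, 3], [0, 1, 2, 3, 3, 4, 5, 6, 7, 8, 10]),
  ([0, 1, 1, 2, 3, 3], [0, 1, 3, 3, 4, 5, 6, 7, 8, 9, 10]),
  ([0, 1, 1, 2, 3, 3], [1, 2, 3, 3, 4, 4, 5, 6, 8, 10, 11]),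
  ([0, 1, 1, 2, 3, 3], [1, 3, 3, 4, 4, 5, 6, 8, 9, 10, 11]),
  ([0, 0, 1, 1, 2, 3], [2, 3, 4, 5, 6, 6, 7, 8, 10, 11, 11]),
  ([0, 0, 1, 1, 2, 3], [3, 4, 5, 6, 6, 7, 8, 9, 10, 11, 11]),
  ([0, 0, 1, 1, 2, 3], [1, 2, 3, 4, 6, 6, 7, 8, 10, 11, 11]),
  ([0, 0, 1, 1, 2, 3], [1, 3, 4, 6, 6, 7, 8, 9, 10, 11, 11]),
  ([0, 1, 1, 2, 2, 3, 3], [0, 1, 2, 3, 3, 4, 5, 6, 7, 8, 8, 9, 10]),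
  ([0, 1, 1, 2, 2, 3, 3], [1, 2, 3, 3, 4, 5, 6, 7, 8, 8, 9, 10, 11]),
  ([0, 1, 1, 2, 2, 3, 3], [1, 2, 3, 3, 4, 4, 5, 6, 8, 8, 9, 10, 11]),
  ([0, 0, 1, 1, 2, 3, 3], [1, 2, 3, 3, 4, 5, 6, 6, 7, 8, 10, 11, 11]),
  ([0, 0, 1, 1, 2, 3, 3], [1, 3, 3, 4, 5, 6, 6, 7, 8, 9, 10, 11, 11]),
  ([0, 0, 1, 1, 2, 3, 3], [1, 2, 3, 3, 4, 4, 5, 6, 6, 8, 10, 11, 11]),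
  ([0, 0, 1, 1, 2, 3, 3], [1, 3, 3, 4, 4, 5, 6, 6, 8, 9, 10, 11, 11]),
  ([0, 0, 1, 1, 2, 2, 3], [1, 2, 3, 4, 6, 6, 7, 8, 8, 9, 10, 11, 11]),
  ([0, 0, 1, 1, 2, 2, 3], [2, 3, 4, 5, 6, 6, 7, 8, 8, 9, 10, 11, 11]),
  ([0, 0, 1, 1, 2, 2, 3], [1, 3, 4, 6, 6, 7, 8, 8, 9, 9, 10, 11, 11]),
  ([0, 0, 1, 1, 2, 2, 3, 3], [1, 2, 3, 3, 4, 5, 6, 6, 7, 8, 8, 9, 10, 11, 11]),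
  ([0, 0, 1, 1, 2, 2, 3, 3], [1, 2, 3, 3, 4, 4, 5, 6, 6, 8, 8, 9, 10, 11, 11]),
  ([0, 1, 1, 1, 2, 3, 3], [1, 2, 3, 3, 4, 4, 5, 6, 7, 8, 10, 10, 11]),
  ([0, 1, 1, 1, 2, 3, 3], [1, 3, 3, 4, 4, 5, 6, 7, 8, 9, 10, 10, 11]),
  ([0, 1, 1, 1, 2, 3, 3], [0, 1, 2, 3, 3, 4, 4, 5, 6, 7, 8, 10, 10]),
  ([0, 1, 1, 1, 2, 3, 3], [0, 1, 3, 3, 4, 4, 5, 6, 7, 8, 9, 10, 10]),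
  ([0, 1, 1, 1, 2, 2, 3, 3], [0, 1, 3, 3, 4, 4, 5, 6, 7, 8, 8, 9, 9, 10, 10]),
  ([0, 1, 1, 1, 2, 2, 3, 3], [1, 3, 3, 4, 4, 5, 6, 7, 8, 8, 9, 9, 10, 10, 11]),
  ([0, 0, 1, 1, 1, 2, 3, 3], [0, 1, 3, 3, 4, 4, 5, 6, 6, 7, 8, 9, 10, 10, 11]),
  ([0, 0, 1, 1, 1, 2, 3, 3], [0, 1, 2, 3, 3, 4, 4, 5, 6, 6, 7, 8, 10, 10, 11]),
  ([0, 0, 1, 1, 1, 2, 2, 3, 3], [0, 1, 3, 3, 4, 4, 5, 6, 6, 7, 8, 8, 9, 9, 10, 10, 11]),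
  ([0, 1, 1, 1, 2, 2, 2, 3, 3], [1, 2, 3, 3, 4, 4, 5, 6, 7, 8, 8, 8, 9, 9, 10, 10, 11]),
  ([0, 1, 1, 1, 2, 2, 2, 3, 3], [0, 1, 2, 3, 3, 4, 4, 5, 6, 7, 8, 8, 8, 9, 9, 10, 10]),
  ([0, 0, 0, 1, 1, 1, 2, 3, 3], [1, 2, 3, 3, 4, 4, 5, 6, 6, 6, 7, 8, 10, 10, 11, 11, 11]),
  ([0, 0, 0, 1, 1, 1, 2, 3, 3], [1, 3, 3, 4, 4, 5, 6, 6, 6, 7, 8, 9, 10, 10, 11, 11, 11]),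
  ([0, 0, 0, 1, 1, 1, 2, 2, 2, 3, 3],
    [1, 2, 3, 3, 4, 4, 5, 6, 6, 6, 7, 8, 8, 8, 9, 9, 10, 10, 11, 11, 11]),
  ([0, 0, 1, 1, 1, 2, 2, 2, 3, 3], [0, 1, 2, 3, 3, 4, 4, 5, 6, 6, 7, 8, 8, 8, 9, 9, 10, 10, 11]),
  ([0, 0, 0, 1, 1, 1, 2, 2, 3, 3], [1, 3, 3, 4, 4, 5, 6, 6, 6, 7, 8, 8, 9, 9, 10, 10, 11, 11, 11])]

/-- The index type of the 86 inequalities describing `ConeSet`: nonnegativity of the entries of `k`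
and of `p`, and the inequalities of `inequalityTerms`. -/
abbrev ConeIndex := (Fin 4 ⊕ Fin 12) ⊕ Fin 70

/-- The differences of the two sides of the inequalities describing `ConeSet`, over any ring because
the rays are computed over `ℤ`. -/
def slack (𝕜 : Type*) [CommRing 𝕜] : ConeIndex → ((Fin 4 → 𝕜) × (Fin 12 → 𝕜)) →ₗ[𝕜] 𝕜
  | .inl (.inl i) => LinearMap.proj i ∘ₗ LinearMap.fst 𝕜 _ _
  | .inl (.inr j) => LinearMap.proj j ∘ₗ LinearMap.snd 𝕜 _ _
  | .inr t =>
    { toFun x := ((inequalityTerms t).1.map x.1).sum - ((inequalityTerms t).2.map x.2).sum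
      map_add' x y := by
        simp only [Prod.fst_add, Prod.snd_add, Pi.add_def, List.sum_map_add]
        ring
      map_smul' c x := by
        simp only [Prod.smul_fst, Prod.smul_snd, Pi.smul_def, smul_eq_mul, List.sum_map_mul_left,
          RingHom.id_apply, mul_sub] }

/-- The bit representing an inequality in the masks of the rays. -/
def slackBit : ConeIndex → ℕ
  | .inl (.inl i) => i
  | .inl (.inr j) => 4 + j
  | .inr t => 16 + t

/-- The entrywise inclusion of integer into rational vectors. -/
def ratVec : (Fin 4 → ℤ) × (Fin 12 → ℤ) →+ (Fin 4 → ℚ) × (Fin 12 → ℚ) :=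
  ((Int.castAddHom ℚ).compLeft (Fin 4)).prodMap ((Int.castAddHom ℚ).compLeft (Fin 12))

/-- The entrywise numerator, inverse to `ratVec` on vectors with integer entries. -/
def numVec (x : (Fin 4 → ℚ) × (Fin 12 → ℚ)) : (Fin 4 → ℤ) × (Fin 12 → ℤ) :=
  (fun i ↦ (x.1 i).num, fun j ↦ (x.2 j).num)

/-- The standard basis, indexed as the functionals `slack 𝕜 (.inl c)` dual to it. -/
def unitVec : Fin 4 ⊕ Fin 12 → (Fin 4 → ℤ) × (Fin 12 → ℤ)
  | .inl i => (Pi.single i 1, 0)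
  | .inr j => (0, Pi.single j 1)

/-- The rays of the cone, computed by the double description method starting from the orthant. -/
def coneRays : List (Ray ((Fin 4 → ℤ) × (Fin 12 → ℤ))) :=
  ((List.finRange 70).map .inr).foldl (imposeInequality (fun i ↦ slack ℤ i) slackBit)
    (((List.finRange 4).map Sum.inl ++ (List.finRange 12).map Sum.inr).map fun c ↦
      ⟨unitVec c, 2 ^ slackBit (.inl c)⟩)

lemma slackBit_injective : Function.Injective slackBit := by
  rintro ((i | i) | i) ((j | j) | j) h <;> simp only [slackBit] at h <;>
    simp only [Sum.inl.injEq, Sum.inr.injEq, reduceCtorEq, Fin.ext_iff] <;> omega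

lemma slack_ratVec (i : ConeIndex) (v : (Fin 4 → ℤ) × (Fin 12 → ℤ)) :
    slack ℚ i (ratVec v) = slack ℤ i v := by
  rcases i with (i | j) | t
  · rfl
  · rfl
  · simp only [slack, LinearMap.coe_mk, AddHom.coe_mk, Int.cast_sub, Int.cast_list_sum,
      List.map_map]
    rfl

lemma slack_inl_unitVec (c d : Fin 4 ⊕ Fin 12) :
    slack ℤ (.inl c) (unitVec d) = if c = d then 1 else 0 := by
  rcases c with i | i <;> rcases d with j | j <;> simp [slack, unitVec, Pi.single_apply]

lemma eq_zero_of_supportOn_slack_inl_eq_empty (x : (Fin 4 → ℚ) × (Fin 12 → ℚ))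
    (hx : supportOn (slack ℚ) (univ.map Function.Embedding.inl) x = ∅) : x = 0 := by
  have hcoord : ∀ c, slack ℚ (.inl c) x = 0 := fun c ↦ by
    simpa [mem_supportOn] using eq_empty_iff_forall_notMem.1 hx (.inl c)
  exact Prod.ext (funext fun i ↦ hcoord (.inl i)) (funext fun j ↦ hcoord (.inr j))

lemma eq_zero_of_supportOn_slack_eq_empty (x : (Fin 4 → ℚ) × (Fin 12 → ℚ))
    (hx : supportOn (slack ℚ) univ x = ∅) : x = 0 :=
  eq_zero_of_supportOn_slack_inl_eq_empty x <|
    subset_empty.1 (hx ▸ filter_subset_filter _ (subset_univ _))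

lemma isRayList_coneRays :
    IsRayList (slack ℚ) (fun i ↦ slack ℤ i) slackBit ratVec univ coneRays := by
  have hunit := isRayList_map_of_biorthogonal slack_ratVec slackBit_injective
    eq_zero_of_supportOn_slack_inl_eq_empty slack_inl_unitVec
    (l := (List.finRange 4).map Sum.inl ++ (List.finRange 12).map Sum.inr) (by simp)
  have hall : ((List.finRange 70).map Sum.inr).toFinset ∪ univ.map Function.Embedding.inl =
      (univ : Finset ConeIndex) := by
    ext i
    cases i <;> simp
  rw [← hall, coneRays]
  exact hunit.foldl_imposeInequality slack_ratVec slackBit_injective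
    eq_zero_of_supportOn_slack_inl_eq_empty _

-- The sum of the entries of `k` is the factor because it is 1 for every fundamental generator.
lemma exists_ratVec_eq_smul_gens : ∀ r ∈ coneRays,
    0 ≤ ∑ i, r.vec.1 i ∧ ∃ t, ratVec r.vec = ((∑ i, r.vec.1 i : ℤ) : ℚ) • gens t := by
  decide +kernel

lemma ratVec_numVec_gens : ∀ t, ratVec (numVec (gens t)) = gens t := by
  decide +kernel

lemma slack_numVec_gens_nonneg : ∀ t i, 0 ≤ slack ℤ i (numVec (gens t)) := by
  decide +kernel

lemma gens_mem_inequalityCone (t : Fin 52) : gens t ∈ inequalityCone (slack ℚ) univ := by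
  refine mem_inequalityCone.2 fun i _ ↦ ?_
  rw [← ratVec_numVec_gens, slack_ratVec]
  exact_mod_cast slack_numVec_gens_nonneg t i

theorem hull_range_gens : PointedCone.hull ℚ (Set.range gens) = inequalityCone (slack ℚ) univ := by
  refine le_antisymm (Submodule.span_le.2 ?_) ?_
  · rintro _ ⟨t, rfl⟩
    exact gens_mem_inequalityCone t
  · rw [← isRayList_coneRays.isSupportDense.hull_eq eq_zero_of_supportOn_slack_eq_empty]
    refine Submodule.span_le.2 ?_
    rintro _ ⟨r, hr, rfl⟩
    obtain ⟨hnonneg, t, ht⟩ := exists_ratVec_eq_smul_gens r hr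
    simp only [ht]
    exact PointedCone.smul_mem _ (by exact_mod_cast hnonneg) (PointedCone.subset_hull ⟨t, rfl⟩)

lemma satisfiesIneqs_iff {k : Fin 4 → ℚ} {p : Fin 12 → ℚ} :
    SatisfiesIneqs k p ↔
      ∀ t, ((inequalityTerms t).2.map p).sum ≤ ((inequalityTerms t).1.map k).sum := by
  have three_mul : ∀ a : ℚ, 3 * a = a + (a + a) := fun a ↦ by ring
  simp only [SatisfiesIneqs, inequalityTerms, Fin.forall_fin_succ, IsEmpty.forall_iff, and_true,
    Matrix.cons_val_zero, Matrix.cons_val_succ, List.map_cons, List.map_nil, List.sum_cons,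
    List.sum_nil, add_zero, add_assoc, two_mul, three_mul]

lemma mem_coneSet_iff {x : (Fin 4 → ℚ) × (Fin 12 → ℚ)} :
    x ∈ ConeSet ↔ x ∈ inequalityCone (slack ℚ) univ := by
  simp [ConeSet, mem_inequalityCone, satisfiesIneqs_iff, slack, and_assoc]

end Cone

/-- Proposition 4 of the paper: the cone Σ^f_ℚ spanned by the essential signatures of
fundamental highest weights of D4 is given by the 70 inequalities. -/
theorem coneSet_eq_nonneg_span :
    ConeSet =
      {x | ∃ c : Fin 52 → ℚ, (∀ t, 0 ≤ c t) ∧ x = ∑ t, c t • gens t} := by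
  ext x
  rw [mem_coneSet_iff, ← hull_range_gens, mem_hull_range_iff, Set.mem_ofPred_eq]
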